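/- The expected total variation distance between the target quasi-probability mixture p and the signed empirical estimator p̃ built from N i.i.d. samples satisfies E[ (1/2)·∑_x |p_x − p̃_x| ] ≤ (γ/(2·√N)) · ∑_x √(q_x). (Expected-error bound used in the proof of Proposition 1.) -/

import Mathlib

open MeasureTheory Finset

/-! By linearity it is enough to bound `E|p_x - p̃_x|` for one `x`. There `p̃_x` is `γ` times a
sample mean of the signed indicator `S·1[X = x]`, whose mean is `p_x / γ` and whose second moment is
`q_x`; hence `E|p_x - p̃_x| ≤ √(Var p̃_x) ≤ γ √(q_x / N)`.

Points of `ι × Bool` need not be measurable, but since the outer measures of the points add up to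
`1`, every set satisfies Carathéodory's equality `μ s + μ sᶜ = 1` and is therefore
null-measurable. -/

section NullMeasurable

variable {α : Type*} [MeasurableSpace α] {μ : Measure α}

lemma integral_indicator_one_of_nullMeasurableSet {s : Set α} (hs : NullMeasurableSet s μ) :
    ∫ a, s.indicator (1 : α → ℝ) a ∂μ = μ.real s := by
  simp [integral_indicator₀ hs]

variable [IsFiniteMeasure μ]

lemma nullMeasurableSet_of_measure_add_measure_compl_le {s : Set α}
    (h : μ s + μ sᶜ ≤ μ Set.univ) : NullMeasurableSet s μ := by
  set innerHull := (toMeasurable μ sᶜ)ᶜ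
  have measurableSet_innerHull : MeasurableSet innerHull :=
    (measurableSet_toMeasurable μ sᶜ).compl
  have innerHull_subset : innerHull ⊆ s := Set.compl_subset_comm.1 (subset_toMeasurable μ sᶜ)
  have measure_le : μ s ≤ μ innerHull := by
    rw [measure_compl (measurableSet_toMeasurable μ sᶜ) (measure_ne_top μ _),
      measure_toMeasurable]
    exact ENNReal.le_sub_of_add_le_right (measure_ne_top μ _) h
  exact measurableSet_innerHull.nullMeasurableSet.congr <|
    ae_eq_of_subset_of_measure_ge innerHull_subset measure_le
      measurableSet_innerHull.nullMeasurableSet (measure_ne_top μ s)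

lemma nullMeasurableSet_of_tsum_measure_singleton_le [Countable α]
    (h : ∑' a, μ {a} ≤ μ Set.univ) (s : Set α) : NullMeasurableSet s μ := by
  have measure_le_tsum (t : Set α) : μ t ≤ ∑' a : t, μ {(a : α)} := by
    simpa using measure_biUnion_le μ t.to_countable (fun a => {a})
  refine nullMeasurableSet_of_measure_add_measure_compl_le ?_
  calc μ s + μ sᶜ
      ≤ ∑' a : s, μ {(a : α)} + ∑' a : ↑sᶜ, μ {(a : α)} :=
        add_le_add (measure_le_tsum s) (measure_le_tsum sᶜ)
    _ = ∑' a, μ {a} :=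
        ENNReal.summable.tsum_add_tsum_compl (f := fun a => μ {a}) ENNReal.summable
    _ ≤ μ Set.univ := h

lemma integrable_indicator_one {s : Set α} (hs : NullMeasurableSet s μ) :
    Integrable (s.indicator (1 : α → ℝ)) μ :=
  (integrable_const 1).indicator₀ hs

end NullMeasurable

section SampleMean

open ProbabilityTheory

variable {α κ : Type*} [Fintype κ]

/-- The average of `f` over the sample points `ω k`, an unbiased estimator of `∫ f` when these are
drawn from the same law. It is `0` for an empty sample. -/
noncomputable def sampleMean (f : α → ℝ) (ω : κ → α) : ℝ := (∑ k, f (ω k)) / Fintype.card κ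

lemma sampleMean_eq_smul_sum (f : α → ℝ) :
    (sampleMean f : (κ → α) → ℝ) = (Fintype.card κ : ℝ)⁻¹ • ∑ k, fun ω : κ → α => f (ω k) := by
  ext ω
  simp [sampleMean, div_eq_inv_mul]

variable [MeasurableSpace α] {μ : Measure α} [IsProbabilityMeasure μ]

lemma integral_abs_sub_integral_le_sqrt_variance {X : α → ℝ} (hX : MemLp X 2 μ) :
    ∫ a, |X a - μ[X]| ∂μ ≤ √Var[X; μ] := by
  have memLp_deviation : MemLp (fun a => |X a - μ[X]|) 2 μ := (hX.sub (memLp_const _)).abs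
  have variance_deviation := variance_nonneg (fun a => |X a - μ[X]|) μ
  rw [variance_eq_sub memLp_deviation] at variance_deviation
  refine Real.le_sqrt_of_sq_le ?_
  simpa [variance_eq_integral hX.aemeasurable] using variance_deviation

lemma memLp_sampleMean {f : α → ℝ} {r : ENNReal} (hf : MemLp f r μ) :
    MemLp (sampleMean f) r (Measure.pi fun _ : κ => μ) := by
  have memLp_eval (k : κ) : MemLp (fun ω : κ → α => f (ω k)) r (Measure.pi fun _ => μ) :=
    hf.comp_measurePreserving (measurePreserving_eval (fun _ => μ) k)
  rw [sampleMean_eq_smul_sum]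
  exact (memLp_finsetSum' univ fun k _ => memLp_eval k).const_smul _

lemma integral_sampleMean [Nonempty κ] {f : α → ℝ} (hf : Integrable f μ) :
    ∫ ω, sampleMean f ω ∂(Measure.pi fun _ : κ => μ) = ∫ a, f a ∂μ := by
  have integral_eval (k : κ) : ∫ ω, f (ω k) ∂(Measure.pi fun _ : κ => μ) = ∫ a, f a ∂μ :=
    integral_comp_eval hf.aestronglyMeasurable
  simp only [sampleMean]
  rw [integral_div, integral_finsetSum _ fun k _ => integrable_comp_eval hf]
  simp [integral_eval]

lemma variance_sampleMean {f : α → ℝ} (hf : MemLp f 2 μ) :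
    Var[sampleMean f; Measure.pi fun _ : κ => μ] = Var[f; μ] / Fintype.card κ := by
  rw [sampleMean_eq_smul_sum, variance_smul, variance_sum_pi fun _ => hf]
  simp only [sum_const, card_univ, nsmul_eq_mul]
  rcases eq_or_ne (Fintype.card κ : ℝ) 0 with card_eq | card_ne
  · simp [card_eq]
  · field_simp

lemma integral_abs_integral_sub_sampleMean_le [Nonempty κ] {f : α → ℝ} (hf : MemLp f 2 μ) :
    ∫ ω, |∫ a, f a ∂μ - sampleMean f ω| ∂(Measure.pi fun _ : κ => μ) ≤
      √(∫ a, f a ^ 2 ∂μ) / √(Fintype.card κ) := by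
  calc ∫ ω, |∫ a, f a ∂μ - sampleMean f ω| ∂(Measure.pi fun _ : κ => μ)
      ≤ √Var[sampleMean f; Measure.pi fun _ : κ => μ] := by
        simpa only [integral_sampleMean (hf.integrable one_le_two), abs_sub_comm] using
          integral_abs_sub_integral_le_sqrt_variance (memLp_sampleMean (κ := κ) hf)
    _ = √Var[f; μ] / √(Fintype.card κ) := by
        rw [variance_sampleMean hf, Real.sqrt_div (variance_nonneg f μ)]
    _ ≤ √(∫ a, f a ^ 2 ∂μ) / √(Fintype.card κ) := by
        gcongr
        exact variance_le_expectation_sq hf.aestronglyMeasurable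

lemma integral_sum_abs_integral_sub_sampleMean_le [Nonempty κ] {ι : Type*} (s : Finset ι)
    {f : ι → α → ℝ} (hf : ∀ x ∈ s, MemLp (f x) 2 μ) :
    ∫ ω, ∑ x ∈ s, |∫ a, f x a ∂μ - sampleMean (f x) ω| ∂(Measure.pi fun _ : κ => μ) ≤
      (∑ x ∈ s, √(∫ a, f x a ^ 2 ∂μ)) / √(Fintype.card κ) := by
  have integrable_deviation (x : ι) (hx : x ∈ s) :
      Integrable (fun ω : κ → α => |∫ a, f x a ∂μ - sampleMean (f x) ω|)
        (Measure.pi fun _ => μ) :=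
    ((integrable_const _).sub ((memLp_sampleMean (hf x hx)).integrable one_le_two)).abs
  rw [integral_finsetSum _ integrable_deviation, sum_div]
  exact sum_le_sum fun x hx => integral_abs_integral_sub_sampleMean_le (hf x hx)

end SampleMean

section SignedIndicator

variable {ι : Type*} [DecidableEq ι]

/-- The signed indicator `S·1[X = x]` of an outcome `x` as a function of the signed sample
`(X, S)`, the sign `S` being encoded as a Boolean (`true` for `+1`, `false` for `-1`). -/
def signedIndicator (x : ι) (z : ι × Bool) : ℝ := if z.1 = x then (if z.2 then 1 else -1) else 0

lemma signedIndicator_eq_indicator_sub_indicator (x : ι) :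
    signedIndicator x = Set.indicator {(x, true)} 1 - Set.indicator {(x, false)} 1 := by
  ext ⟨y, s⟩
  by_cases h : y = x <;> cases s <;> simp [signedIndicator, h]

lemma signedIndicator_sq_eq_indicator_add_indicator (x : ι) :
    signedIndicator x ^ 2 = Set.indicator {(x, true)} 1 + Set.indicator {(x, false)} 1 := by
  ext ⟨y, s⟩
  by_cases h : y = x <;> cases s <;> simp [signedIndicator, h]

variable [MeasurableSpace ι] {μ : Measure (ι × Bool)} [IsFiniteMeasure μ] {x : ι}

lemma memLp_signedIndicator (hμ : ∀ s, NullMeasurableSet {(x, s)} μ) (r : ENNReal) :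
    MemLp (signedIndicator x) r μ := by
  have aestronglyMeasurable_signedIndicator : AEStronglyMeasurable (signedIndicator x) μ := by
    rw [signedIndicator_eq_indicator_sub_indicator]
    exact (aestronglyMeasurable_one.indicator₀ (hμ true)).sub
      (aestronglyMeasurable_one.indicator₀ (hμ false))
  refine .of_bound aestronglyMeasurable_signedIndicator 1 (.of_forall fun z => ?_)
  unfold signedIndicator
  split_ifs <;> simp

lemma integral_signedIndicator (hμ : ∀ s, NullMeasurableSet {(x, s)} μ) :
    ∫ z, signedIndicator x z ∂μ = μ.real {(x, true)} - μ.real {(x, false)} := by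
  simp only [signedIndicator_eq_indicator_sub_indicator, Pi.sub_apply]
  rw [integral_sub (integrable_indicator_one (hμ true)) (integrable_indicator_one (hμ false)),
    integral_indicator_one_of_nullMeasurableSet (hμ true),
    integral_indicator_one_of_nullMeasurableSet (hμ false)]

lemma integral_signedIndicator_sq (hμ : ∀ s, NullMeasurableSet {(x, s)} μ) :
    ∫ z, signedIndicator x z ^ 2 ∂μ = μ.real {(x, true)} + μ.real {(x, false)} := by
  have sq_eq (z : ι × Bool) : signedIndicator x z ^ 2 =
      Set.indicator {(x, true)} 1 z + Set.indicator {(x, false)} 1 z :=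
    congrFun (signedIndicator_sq_eq_indicator_add_indicator x) z
  simp only [sq_eq]
  rw [integral_add (integrable_indicator_one (hμ true)) (integrable_indicator_one (hμ false)),
    integral_indicator_one_of_nullMeasurableSet (hμ true),
    integral_indicator_one_of_nullMeasurableSet (hμ false)]

lemma integral_sum_abs_sub_sampleMean_signedIndicator_le {κ : Type*} [Fintype κ] [Nonempty κ]
    {μ : Measure (ι × Bool)} [IsProbabilityMeasure μ] {s : Finset ι}
    (hμ : ∀ x ∈ s, ∀ b, NullMeasurableSet {(x, b)} μ) :
    ∫ ω, ∑ x ∈ s, |(μ.real {(x, true)} - μ.real {(x, false)}) - sampleMean (signedIndicator x) ω|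
        ∂(Measure.pi fun _ : κ => μ) ≤
      (∑ x ∈ s, √(μ.real {(x, true)} + μ.real {(x, false)})) / √(Fintype.card κ) := by
  convert integral_sum_abs_integral_sub_sampleMean_le (κ := κ) s
    fun x hx => memLp_signedIndicator (hμ x hx) 2 using 4 with ω x hx x hx
  · rw [integral_signedIndicator (hμ x hx)]
  · rw [integral_signedIndicator_sq (hμ x hx)]

end SignedIndicator

lemma sum_ofReal_div_sum_eq_one {α : Type*} {s : Finset α} {w : α → ℝ} (hw : ∀ a ∈ s, 0 ≤ w a)
    (hs : 0 < ∑ a ∈ s, w a) : ∑ a ∈ s, ENNReal.ofReal (w a / ∑ b ∈ s, w b) = 1 := by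
  rw [← ENNReal.ofReal_sum_of_nonneg fun a ha => div_nonneg (hw a ha) hs.le, ← sum_div,
    div_self hs.ne', ENNReal.ofReal_one]

theorem expected_tv_distance_bound_general
    {ι : Type*} [Fintype ι] [DecidableEq ι] [MeasurableSpace ι]
    (a b : ι → ℝ) (ha : ∀ x, 0 ≤ a x) (hb : ∀ x, 0 ≤ b x)
    (γ : ℝ) (hγ : γ = ∑ x, (a x + b x)) (hγ_pos : 0 < γ)
    (μ : Measure (ι × Bool)) [IsProbabilityMeasure μ]
    (hμt : ∀ x, μ {(x, true)} = ENNReal.ofReal (a x / γ))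
    (hμf : ∀ x, μ {(x, false)} = ENNReal.ofReal (b x / γ))
    (N : ℕ) (hN : 0 < N) :
    ∫ ω, ((1 / 2) * ∑ x, |(a x - b x) - (γ / N) *
          ∑ i, (if (ω i).1 = x then (if (ω i).2 then (1 : ℝ) else -1) else 0)|)
        ∂(Measure.pi fun _ : Fin N => μ)
      ≤ γ / (2 * √N) * ∑ x, √((a x + b x) / γ) := by
  have : Nonempty (Fin N) := ⟨⟨0, hN⟩⟩
  have a_div_nonneg (x : ι) : 0 ≤ a x / γ := div_nonneg (ha x) hγ_pos.le
  have b_div_nonneg (x : ι) : 0 ≤ b x / γ := div_nonneg (hb x) hγ_pos.le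
  have sum_measure_singleton : ∑ z, μ {z} = 1 := by
    simp only [Fintype.sum_prod_type, Fintype.sum_bool, hμt, hμf,
      ← ENNReal.ofReal_add (a_div_nonneg _) (b_div_nonneg _), ← add_div]
    subst hγ
    exact sum_ofReal_div_sum_eq_one (fun x _ => add_nonneg (ha x) (hb x)) hγ_pos
  have nullMeasurableSet_atom (z : ι × Bool) : NullMeasurableSet {z} μ :=
    nullMeasurableSet_of_tsum_measure_singleton_le (by simp [sum_measure_singleton]) _
  have bound := integral_sum_abs_sub_sampleMean_signedIndicator_le (κ := Fin N) (s := univ)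
    fun x _ s => nullMeasurableSet_atom (x, s)
  simp only [measureReal_def, hμt, hμf, ENNReal.toReal_ofReal (a_div_nonneg _),
    ENNReal.toReal_ofReal (b_div_nonneg _), ← sub_div, ← add_div, Fintype.card_fin] at bound
  have deviation_eq (x : ι) (ω : Fin N → ι × Bool) :
      |(a x - b x) - γ / N * ∑ i, signedIndicator x (ω i)| =
        γ * |(a x - b x) / γ - sampleMean (signedIndicator x) ω| := by
    rw [← abs_of_pos hγ_pos, ← abs_mul, abs_of_pos hγ_pos, sampleMean, Fintype.card_fin]
    field_simp
  calc ∫ ω, 1 / 2 * ∑ x, |(a x - b x) - γ / N * ∑ i, signedIndicator x (ω i)|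
        ∂(Measure.pi fun _ : Fin N => μ)
      = γ / 2 * ∫ ω, ∑ x, |(a x - b x) / γ - sampleMean (signedIndicator x) ω|
        ∂(Measure.pi fun _ : Fin N => μ) := by
        simp only [deviation_eq, ← mul_sum, integral_const_mul]
        ring
    _ ≤ γ / 2 * ((∑ x, √((a x + b x) / γ)) / √N) := by gcongr
    _ = γ / (2 * √N) * ∑ x, √((a x + b x) / γ) := by ring

/-- Expected-error bound used in the proof of Proposition 1: the expected total
variation distance between the target quasi-probability mixture `p` and the signed
empirical estimator `p̃` built from `N` i.i.d. samples satisfies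
`E[(1/2)·∑_x |p_x − p̃_x|] ≤ (γ/(2√N))·∑_x √(q_x)`. -/
theorem expected_tv_distance_bound
    {ι : Type*} [Fintype ι] [DecidableEq ι] [MeasurableSpace ι]
    (pp pm : ι → ℝ)
    (hpp0 : ∀ x, 0 ≤ pp x) (hpp1 : ∑ x, pp x = 1)
    (hpm0 : ∀ x, 0 ≤ pm x) (hpm1 : ∑ x, pm x = 1)
    (cp cm : ℝ) (hcp : 0 ≤ cp) (hcm : 0 ≤ cm) (hc : cp - cm = 1)
    (γ : ℝ) (hγ : γ = cp + cm)
    (p : ι → ℝ) (hp : ∀ x, p x = cp * pp x - cm * pm x)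
    (hp0 : ∀ x, 0 ≤ p x)
    (q : ι → ℝ) (hq : ∀ x, q x = (cp * pp x + cm * pm x) / γ)
    (μ1 : Measure (ι × Bool)) [IsProbabilityMeasure μ1]
    (hμt : ∀ x, μ1 {(x, true)} = ENNReal.ofReal (cp * pp x / γ))
    (hμf : ∀ x, μ1 {(x, false)} = ENNReal.ofReal (cm * pm x / γ))
    (N : ℕ) (hN : 0 < N) :
    ∫ ω, ((1 / 2) * ∑ x, |p x - (γ / N) *
          ∑ i, (if (ω i).1 = x then (if (ω i).2 then (1 : ℝ) else -1) else 0)|)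
        ∂(Measure.pi fun _ : Fin N => μ1)
      ≤ γ / (2 * Real.sqrt N) * ∑ x, Real.sqrt (q x) := by
  subst hγ
  simpa only [hp, hq] using expected_tv_distance_bound_general (fun x => cp * pp x)
    (fun x => cm * pm x) (fun x => mul_nonneg hcp (hpp0 x)) (fun x => mul_nonneg hcm (hpm0 x))
    (cp + cm) (by rw [sum_add_distrib, ← mul_sum, ← mul_sum, hpp1, hpm1, mul_one, mul_one])
    (by linarith) μ1 hμt hμf N hN
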